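/- Let I be a position on the board 𝔖 and A ∈ 𝔖 a point such that some position reachable from I by legal moves contains A (i.e. the height of A with respect to I is finite). Then for every nonnegative resource count π on 𝔖, one has ⟨χ_I, π⟩ = Σ_{B∈I} π(B) ≥ π(A). -/

import Mathlib

def dirs : Finset (ℤ × ℤ) := {(1,0), (-1,0), (0,1), (0,-1)}

def chi (X : ℤ × ℤ) : (ℤ × ℤ) → ℤ := fun Y => if Y = X then 1 else 0

def chiSet (I : Finset (ℤ × ℤ)) : (ℤ × ℤ) → ℤ := fun P => if P ∈ I then 1 else 0

def IsMove (S : Finset (ℤ × ℤ)) (g : (ℤ × ℤ) → ℤ) : Prop :=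
  ∃ P d : ℤ × ℤ, d ∈ dirs ∧ P ∈ S ∧ P + d ∈ S ∧ P + d + d ∈ S ∧
    g = chi P + chi (P + d) - chi (P + d + d)

def IsMiddle (S : Finset (ℤ × ℤ)) (Q : ℤ × ℤ) : Prop :=
  ∃ P d : ℤ × ℤ, d ∈ dirs ∧ P ∈ S ∧ P + d ∈ S ∧ P + d + d ∈ S ∧ Q = P + d

def Neighbor (S : Finset (ℤ × ℤ)) (A B : ℤ × ℤ) : Prop :=
  ∃ d ∈ dirs, A ∈ S ∧ A + d ∈ S ∧ A + d + d ∈ S ∧ B = A + d + d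

def NoIsolatedPoint (S : Finset (ℤ × ℤ)) : Prop :=
  ∀ P ∈ S, ∃ Q, Relation.EqvGen (Neighbor S) P Q ∧ IsMiddle S Q

def IsResourceCount (S : Finset (ℤ × ℤ)) (π : (ℤ × ℤ) → ℝ) : Prop :=
  ∀ P d : ℤ × ℤ, d ∈ dirs → P ∈ S → P + d ∈ S → P + d + d ∈ S →
    π (P + d + d) ≤ π P + π (P + d)

def LegalMove (S I : Finset (ℤ × ℤ)) (g : (ℤ × ℤ) → ℤ) (I' : Finset (ℤ × ℤ)) : Prop :=
  ∃ P d : ℤ × ℤ, d ∈ dirs ∧ P ∈ S ∧ P + d ∈ S ∧ P + d + d ∈ S ∧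
    g = chi P + chi (P + d) - chi (P + d + d) ∧
    P ∈ I ∧ P + d ∈ I ∧ P + d + d ∉ I ∧
    I' = (I \ {P, P + d}) ∪ {P + d + d}

def Transforms (S : Finset (ℤ × ℤ)) :
    List ((ℤ × ℤ) → ℤ) → Finset (ℤ × ℤ) → Finset (ℤ × ℤ) → Prop
  | [], I, J => I = J
  | g :: L, I, J => ∃ I', LegalMove S I g I' ∧ Transforms S L I' J

def boxProd (g₁ g₂ : (ℤ × ℤ) → ℤ) : Sym2 (ℤ × ℤ) → ℤ :=
  Sym2.lift ⟨fun A B => if A = B then g₁ A * g₂ A else g₁ A * g₂ B + g₁ B * g₂ A, by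
    intro A B
    by_cases h : A = B
    · subst h; rfl
    · simp only [if_neg h, if_neg (Ne.symm h)]; ring⟩

def moveAbs (g : (ℤ × ℤ) → ℤ) : (ℤ × ℤ) → ℤ := fun A => |g A|

def IsQMove (S : Finset (ℤ × ℤ)) (c : Sym2 (ℤ × ℤ) → ℤ) : Prop :=
  (∃ A g, A ∈ S ∧ IsMove S g ∧ g A = 0 ∧ c = boxProd (fun B => 2 * chi A B) g) ∨
  (∃ g, IsMove S g ∧ c = boxProd (moveAbs g) g)

def StepList (S : Finset (ℤ × ℤ)) :
    List (Finset (ℤ × ℤ)) → List ((ℤ × ℤ) → ℤ) → Prop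
  | [_], [] => True
  | I :: I' :: Ps, g :: L => LegalMove S I g I' ∧ StepList S (I' :: Ps) L
  | _, _ => False

def pOfSeq (A : ℤ × ℤ) : List (Finset (ℤ × ℤ)) → List ((ℤ × ℤ) → ℤ) → ℕ
  | I :: Ps, g :: L => (if g A ≠ 0 then 1 else if A ∈ I then 1 else 0) + pOfSeq A Ps L
  | _, _ => 0

def bothCount (A A' : ℤ × ℤ) : List ((ℤ × ℤ) → ℤ) → ℕ
  | [] => 0
  | g :: L => (if g A ≠ 0 ∧ g A' ≠ 0 then 1 else 0) + bothCount A A' L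

noncomputable def pagoda (P : ℤ × ℤ) : ℝ := ((Real.sqrt 5 - 1) / 2) ^ (P.1.natAbs + P.2.natAbs)

theorem sum_sdiff_union_le_sum {α M : Type*} [DecidableEq α] [AddCommMonoid M] [Preorder M]
    [AddLeftMono M] {s t u : Finset α} {f : α → M} (hts : t ⊆ s) (hu : Disjoint (s \ t) u)
    (hle : ∑ x ∈ u, f x ≤ ∑ x ∈ t, f x) :
    ∑ x ∈ (s \ t) ∪ u, f x ≤ ∑ x ∈ s, f x :=
  calc ∑ x ∈ (s \ t) ∪ u, f x = ∑ x ∈ s \ t, f x + ∑ x ∈ u, f x := Finset.sum_union hu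
    _ ≤ ∑ x ∈ s \ t, f x + ∑ x ∈ t, f x := by gcongr
    _ = ∑ x ∈ s, f x := Finset.sum_sdiff hts

theorem ne_zero_of_mem_dirs {d : ℤ × ℤ} (hd : d ∈ dirs) : d ≠ 0 := by
  rintro rfl
  exact absurd hd (by decide)

section Board

variable {S I J : Finset (ℤ × ℤ)} {g : ℤ × ℤ → ℤ} {L : List (ℤ × ℤ → ℤ)} {π : ℤ × ℤ → ℝ}

theorem LegalMove.subset (h : LegalMove S I g J) (hI : I ⊆ S) : J ⊆ S := by
  obtain ⟨P, d, -, -, -, hR, -, -, -, -, rfl⟩ := h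
  exact Finset.union_subset (Finset.sdiff_subset.trans hI) (Finset.singleton_subset_iff.2 hR)

theorem LegalMove.sum_le (h : LegalMove S I g J) (hπ : IsResourceCount S π) :
    ∑ B ∈ J, π B ≤ ∑ B ∈ I, π B := by
  obtain ⟨P, d, hd, hPS, hQS, hRS, -, hP, hQ, hR, rfl⟩ := h
  have hPQ : P ≠ P + d := by simpa using ne_zero_of_mem_dirs hd
  have hsub : {P, P + d} ⊆ I := Finset.insert_subset hP (Finset.singleton_subset_iff.2 hQ)
  have hdisj : Disjoint (I \ {P, P + d}) {P + d + d} :=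
    Finset.disjoint_singleton_right.2 fun hmem => hR (Finset.sdiff_subset hmem)
  refine sum_sdiff_union_le_sum hsub hdisj ?_
  rw [Finset.sum_singleton, Finset.sum_pair hPQ]
  exact hπ P d hd hPS hQS hRS

theorem Transforms.subset (h : Transforms S L I J) (hI : I ⊆ S) : J ⊆ S := by
  induction L generalizing I with
  | nil => exact h ▸ hI
  | cons g L ih =>
    obtain ⟨I', hmove, hrest⟩ := h
    exact ih hrest (hmove.subset hI)

theorem Transforms.sum_le (h : Transforms S L I J) (hπ : IsResourceCount S π) :
    ∑ B ∈ J, π B ≤ ∑ B ∈ I, π B := by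
  induction L generalizing I with
  | nil => exact h ▸ le_rfl
  | cons g L ih =>
    obtain ⟨I', hmove, hrest⟩ := h
    exact (ih hrest).trans (hmove.sum_le hπ)

end Board

/-- If some position reachable from `I` contains `A` (finite height), then for
every nonnegative resource count `π` one has `⟨χ_I,π⟩ ≥ π(A)`. -/
theorem finite_height_resource_bound (S I : Finset (ℤ × ℤ)) (hI : I ⊆ S)
    (A : ℤ × ℤ) (hA : A ∈ S)
    (hreach : ∃ (L : List ((ℤ × ℤ) → ℤ)) (J : Finset (ℤ × ℤ)), Transforms S L I J ∧ A ∈ J)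
    (π : (ℤ × ℤ) → ℝ) (hπ : IsResourceCount S π) (hnonneg : ∀ B ∈ S, 0 ≤ π B) :
    π A ≤ ∑ B ∈ I, π B := by
  obtain ⟨L, J, hIJ, hAJ⟩ := hreach
  calc π A ≤ ∑ B ∈ J, π B :=
        Finset.single_le_sum (fun B hB => hnonneg B (hIJ.subset hI hB)) hAJ
    _ ≤ ∑ B ∈ I, π B := hIJ.sum_le hπ
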